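/- Let b, f_1,…,f_n, and g_{j,i} (1 ≤ j ≤ n, 1 ≤ i ≤ m) be real polynomials in n variables, and define p_b := Σ_{j=1}^n (∂b/∂x_j)·f_j and q_{b,i} := Σ_{j=1}^n (∂b/∂x_j)·g_{j,i}. Suppose there exist polynomials η, θ_1,…,θ_m, sum-of-squares polynomials α and Λ, and a real number ρ ≤ 0 such that the polynomial α·p_b + Σ_{i=1}^m θ_i·q_{b,i} + η·b + ρ·Λ − 1 is a sum of squares. Then there is no x ∈ ℝ^n satisfying b(x) = 0, q_{b,i}(x) = 0 for all i = 1,…,m, and p_b(x) ≤ 0; consequently, for every x with b(x) = 0 there exists u ∈ ℝ^m with p_b(x) + Σ_{i=1}^m q_{b,i}(x)·u_i ≥ 0. -/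

import Mathlib

open MvPolynomial

/-- A multivariate real polynomial is a sum of squares. -/
def IsSOS {n : ℕ} (p : MvPolynomial (Fin n) ℝ) : Prop :=
  ∃ (k : ℕ) (g : Fin k → MvPolynomial (Fin n) ℝ), p = ∑ i, (g i) ^ 2

theorem IsSOS.eval_nonneg' {n : ℕ} {p : MvPolynomial (Fin n) ℝ} (h : IsSOS p)
    (x : Fin n → ℝ) : 0 ≤ eval x p := by
  obtain ⟨k, g, rfl⟩ := h
  rw [map_sum]
  refine Finset.sum_nonneg fun i _ => ?_
  rw [map_pow]
  exact sq_nonneg _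

/-- Theorem 6: the first SOS constraint of program (9) with `ρ ≤ 0` certifies
CBF feasibility. -/
theorem synthesis_first_constraint_gives_cbf
    (n m : ℕ)
    (b : MvPolynomial (Fin n) ℝ)
    (f : Fin n → MvPolynomial (Fin n) ℝ)
    (g : Fin n → Fin m → MvPolynomial (Fin n) ℝ)
    (p : MvPolynomial (Fin n) ℝ)
    (hp : p = ∑ j, pderiv j b * f j)
    (q : Fin m → MvPolynomial (Fin n) ℝ)
    (hq : ∀ i, q i = ∑ j, pderiv j b * g j i)
    (η : MvPolynomial (Fin n) ℝ)
    (θ : Fin m → MvPolynomial (Fin n) ℝ)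
    (α Λ : MvPolynomial (Fin n) ℝ) (hα : IsSOS α) (hΛ : IsSOS Λ)
    (ρ : ℝ) (hρ : ρ ≤ 0)
    (hcert : IsSOS (α * p + ∑ i, θ i * q i + η * b + C ρ * Λ - 1)) :
    (¬ ∃ x : Fin n → ℝ,
        eval x b = 0 ∧ (∀ i, eval x (q i) = 0) ∧ eval x p ≤ 0) ∧
      (∀ x : Fin n → ℝ, eval x b = 0 →
        ∃ u : Fin m → ℝ, 0 ≤ eval x p + ∑ i, eval x (q i) * u i) := by
  have key : ¬ ∃ x : Fin n → ℝ,
        eval x b = 0 ∧ (∀ i, eval x (q i) = 0) ∧ eval x p ≤ 0 := by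
    rintro ⟨x, hb, hq0, hp0⟩
    have h1 := hcert.eval_nonneg' x
    have h2 := hα.eval_nonneg' x
    have h3 := hΛ.eval_nonneg' x
    simp only [map_sub, map_add, map_mul, map_sum, hb, hq0, map_one, eval_C, mul_zero,
      Finset.sum_const_zero, add_zero] at h1
    have h4 := mul_nonpos_of_nonneg_of_nonpos h2 hp0
    have h5 := mul_nonpos_of_nonpos_of_nonneg hρ h3
    linarith
  refine ⟨key, fun x hb => ?_⟩
  by_cases h : ∀ i, eval x (q i) = 0
  · refine ⟨0, ?_⟩
    have h6 : 0 ≤ eval x p := by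
      by_contra hc
      exact key ⟨x, hb, h, (not_le.mp hc).le⟩
    simpa using h6
  · push Not at h
    obtain ⟨i, hi⟩ := h
    refine ⟨Pi.single i (-(eval x p) / eval x (q i)), ?_⟩
    have h7 : ∑ j, eval x (q j) * (Pi.single i (-(eval x p) / eval x (q i)) : Fin m → ℝ) j
        = -(eval x p) := by
      rw [Finset.sum_eq_single i]
      · rw [Pi.single_eq_same]
        field_simp
      · intro j _ hj
        rw [Pi.single_eq_of_ne hj, mul_zero]
      · intro hh
        exact absurd (Finset.mem_univ i) hh
    rw [h7]
    simp
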